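/- Let N ≥ 2 and τ ∈ ℝ. Define the softmax aggregator on the simplex by F_τ(c) = Σ_{j=1}^N c_j · e^{τ c_j} / (Σ_{ℓ=1}^N e^{τ c_ℓ}) for c = (c_1,…,c_N) with c_j ≥ 0 and Σ_j c_j = 1. Then the supremum of F_τ over the simplex equals 1/N when τ ≤ 0 (attained at the uniform vector (1/N,…,1/N)), and equals σ(τ,N) = e^τ/(e^τ + N − 1) when τ > 0 (attained at the one-hot vectors). -/

import Mathlib

open Finset

/-- The simplex `Δ^{N−1}`: non-negative coordinates summing to 1. -/
def simplex (N : ℕ) : Set (Fin N → ℝ) :=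
  {c | (∀ j, 0 ≤ c j) ∧ ∑ j, c j = 1}

/-- The softmax aggregator `F_τ(c) = Σ_j c_j · e^{τ c_j} / (Σ_ℓ e^{τ c_ℓ})`. -/
noncomputable def softmaxAgg (τ : ℝ) {N : ℕ} (c : Fin N → ℝ) : ℝ :=
  ∑ j, c j * Real.exp (τ * c j) / (∑ l, Real.exp (τ * c l))

/-- `σ(τ,N) = e^τ / (e^τ + N − 1)`. -/
noncomputable def sigma' (τ : ℝ) (N : ℕ) : ℝ :=
  Real.exp τ / (Real.exp τ + N - 1)

/-!
Write `w j = e^{τ c_j}` for the softmax weights and `W` for their sum, so that `F_τ(c)` is the mean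
of `c` with weights `w`. For `τ ≤ 0` the weights are ordered oppositely to `c`, and Chebyshev's sum
inequality bounds the weighted mean by the plain mean `1 / N`. For `τ > 0` every weight lies in
`[1, e^τ]`, so `W ≥ w j + (N - 1)` for each `j`; averaging this against `c` gives `W ≥ A + (N - 1)`
with `A = ∑ j, c j * w j ≤ e^τ`, and hence `F_τ(c) = A / W ≤ A / (A + N - 1) ≤ σ(τ, N)`.
-/

section OrderedRing

variable {ι 𝕜 : Type*} [Fintype ι] [Ring 𝕜] [PartialOrder 𝕜] [IsOrderedRing 𝕜]
  {c f w : ι → 𝕜} {a b m : 𝕜}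

theorem sum_mul_le_of_mem_stdSimplex (hc : c ∈ stdSimplex 𝕜 ι) (hf : ∀ j, f j ≤ b) :
    ∑ j, c j * f j ≤ b :=
  calc ∑ j, c j * f j ≤ ∑ j, c j * b :=
        sum_le_sum fun j _ => mul_le_mul_of_nonneg_left (hf j) (hc.1 j)
    _ = b := by rw [← sum_mul, hc.2, one_mul]

theorem le_sum_mul_of_mem_stdSimplex (hc : c ∈ stdSimplex 𝕜 ι) (hf : ∀ j, a ≤ f j) :
    a ≤ ∑ j, c j * f j :=
  calc a = ∑ j, c j * a := by rw [← sum_mul, hc.2, one_mul]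
    _ ≤ ∑ j, c j * f j := sum_le_sum fun j _ => mul_le_mul_of_nonneg_left (hf j) (hc.1 j)

theorem add_card_sub_one_mul_le_sum (hw : ∀ j, m ≤ w j) (i : ι) :
    w i + (Fintype.card ι - 1) * m ≤ ∑ j, w j := by
  classical
  have hrest : #(univ.erase i) • m ≤ ∑ j ∈ univ.erase i, w j :=
    card_nsmul_le_sum _ _ _ fun j _ => hw j
  rw [nsmul_eq_mul, cast_card_erase_of_mem (mem_univ i), card_univ] at hrest
  rw [← add_sum_erase _ _ (mem_univ i)]
  gcongr

theorem sum_mul_add_card_sub_one_mul_le_sum (hc : c ∈ stdSimplex 𝕜 ι) (hw : ∀ j, m ≤ w j) :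
    ∑ j, c j * w j + (Fintype.card ι - 1) * m ≤ ∑ j, w j :=
  calc ∑ j, c j * w j + (Fintype.card ι - 1) * m
      = ∑ j, c j * (w j + (Fintype.card ι - 1) * m) := by
        simp only [mul_add, sum_add_distrib, ← sum_mul, hc.2, one_mul]
    _ ≤ ∑ j, w j := sum_mul_le_of_mem_stdSimplex hc (add_card_sub_one_mul_le_sum hw)

end OrderedRing

section OrderedField

variable {ι 𝕜 : Type*} [Fintype ι] [Field 𝕜] [LinearOrder 𝕜] [IsStrictOrderedRing 𝕜]
  {c w : ι → 𝕜} {m M : 𝕜}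

theorem weighted_mean_le_mean_of_antivary (hcw : Antivary c w) (hw : 0 < ∑ j, w j) :
    (∑ j, c j * w j) / ∑ j, w j ≤ (∑ j, c j) / Fintype.card ι := by
  have : Nonempty ι := univ_nonempty_iff.mp (nonempty_of_sum_ne_zero hw.ne')
  rw [div_le_div_iff₀ hw (by exact_mod_cast Fintype.card_pos), mul_comm]
  exact hcw.card_mul_sum_le_sum_mul_sum

theorem div_add_le_div_add_of_le {x y k : 𝕜} (hx : 0 < x) (hxy : x ≤ y) (hk : 0 ≤ k) :
    x / (x + k) ≤ y / (y + k) := by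
  rw [div_le_div_iff₀ (by positivity) (by linarith)]
  linarith [mul_le_mul_of_nonneg_right hxy hk]

theorem weighted_mean_le_div_of_mem_stdSimplex (hc : c ∈ stdSimplex 𝕜 ι) (hm : 0 < m)
    (hmw : ∀ j, m ≤ w j) (hwM : ∀ j, w j ≤ M) :
    (∑ j, c j * w j) / ∑ j, w j ≤ M / (M + (Fintype.card ι - 1) * m) := by
  have : Nonempty ι :=
    univ_nonempty_iff.mp (nonempty_of_sum_ne_zero (hc.2.trans_ne one_ne_zero))
  have hcard : (1 : 𝕜) ≤ Fintype.card ι := by exact_mod_cast Fintype.card_pos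
  have hk : 0 ≤ (Fintype.card ι - 1) * m := mul_nonneg (sub_nonneg.mpr hcard) hm.le
  have hA : 0 < ∑ j, c j * w j := hm.trans_le (le_sum_mul_of_mem_stdSimplex hc hmw)
  calc (∑ j, c j * w j) / ∑ j, w j
      ≤ (∑ j, c j * w j) / (∑ j, c j * w j + (Fintype.card ι - 1) * m) := by
        gcongr
        exact sum_mul_add_card_sub_one_mul_le_sum hc hmw
    _ ≤ M / (M + (Fintype.card ι - 1) * m) :=
        div_add_le_div_add_of_le hA (sum_mul_le_of_mem_stdSimplex hc hwM) hk

end OrderedField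

theorem sum_comp_single {ι α R : Type*} [Fintype ι] [DecidableEq ι] [Zero α] [Ring R]
    (f : α → R) (i : ι) (x : α) :
    ∑ j, f ((Pi.single i x : ι → α) j) = f x + (Fintype.card ι - 1) * f 0 := by
  have hrest : ∀ j ∈ univ.erase i, f ((Pi.single i x : ι → α) j) = f 0 := fun j hj => by
    rw [Pi.single_eq_of_ne (ne_of_mem_erase hj)]
  rw [← add_sum_erase _ _ (mem_univ i), Pi.single_eq_same, sum_eq_card_nsmul hrest, nsmul_eq_mul,
    cast_card_erase_of_mem (mem_univ i), card_univ]

theorem simplex_eq_stdSimplex (N : ℕ) : simplex N = stdSimplex ℝ (Fin N) := rfl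

section SoftmaxAgg

variable {N : ℕ} {τ : ℝ} {c : Fin N → ℝ}

theorem softmaxAgg_eq_div (τ : ℝ) (c : Fin N → ℝ) :
    softmaxAgg τ c = (∑ j, c j * Real.exp (τ * c j)) / ∑ j, Real.exp (τ * c j) :=
  (sum_div ..).symm

theorem softmaxAgg_const [NeZero N] (τ x : ℝ) : softmaxAgg τ (fun _ : Fin N => x) = x := by
  rw [softmaxAgg_eq_div, ← mul_sum]
  exact mul_div_cancel_right₀ x (sum_pos (fun _ _ => Real.exp_pos _) univ_nonempty).ne'

theorem softmaxAgg_single (τ x : ℝ) (i : Fin N) :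
    softmaxAgg τ (Pi.single i x) = x * Real.exp (τ * x) / (Real.exp (τ * x) + N - 1) := by
  rw [softmaxAgg_eq_div, sum_comp_single (fun y => y * Real.exp (τ * y)),
    sum_comp_single (fun y => Real.exp (τ * y))]
  simp [add_sub_assoc]

theorem softmaxAgg_single_one (τ : ℝ) (i : Fin N) :
    softmaxAgg τ (Pi.single i 1) = sigma' τ N := by
  rw [softmaxAgg_single, mul_one, one_mul, sigma']

theorem softmaxAgg_le_mean [NeZero N] (hτ : τ ≤ 0) (c : Fin N → ℝ) :
    softmaxAgg τ c ≤ (∑ j, c j) / N := by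
  have hanti : Antitone fun x => Real.exp (τ * x) :=
    Real.exp_monotone.comp_antitone (antitone_mul_left hτ)
  have h := weighted_mean_le_mean_of_antivary ((monovary_self c).comp_antitone_left hanti).symm
    (sum_pos (fun _ _ => Real.exp_pos _) univ_nonempty)
  simpa only [Function.comp_apply, ← softmaxAgg_eq_div, Fintype.card_fin] using h

theorem softmaxAgg_le_sigma' (hτ : 0 ≤ τ) (hc : c ∈ simplex N) :
    softmaxAgg τ c ≤ sigma' τ N := by
  rw [simplex_eq_stdSimplex] at hc
  have one_le_weight (j : Fin N) : 1 ≤ Real.exp (τ * c j) :=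
    Real.one_le_exp (mul_nonneg hτ (hc.1 j))
  have weight_le (j : Fin N) : Real.exp (τ * c j) ≤ Real.exp τ :=
    Real.exp_le_exp.mpr (mul_le_of_le_one_right hτ (mem_Icc_of_mem_stdSimplex hc j).2)
  have h := weighted_mean_le_div_of_mem_stdSimplex hc one_pos one_le_weight weight_le
  rwa [mul_one, Fintype.card_fin, ← add_sub_assoc, ← softmaxAgg_eq_div] at h

theorem const_one_div_mem_simplex [NeZero N] : (fun _ => 1 / N : Fin N → ℝ) ∈ simplex N :=
  ⟨fun _ => by positivity, by simp⟩

theorem isGreatest_softmaxAgg_of_nonpos [NeZero N] (hτ : τ ≤ 0) :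
    IsGreatest (softmaxAgg τ '' simplex N) (1 / N) := by
  refine ⟨⟨_, const_one_div_mem_simplex, softmaxAgg_const τ _⟩, ?_⟩
  rintro _ ⟨c, hc, rfl⟩
  simpa only [hc.2] using softmaxAgg_le_mean hτ c

theorem isGreatest_softmaxAgg_of_nonneg [NeZero N] (hτ : 0 ≤ τ) :
    IsGreatest (softmaxAgg τ '' simplex N) (sigma' τ N) := by
  refine ⟨⟨_, single_mem_stdSimplex ℝ 0, softmaxAgg_single_one τ 0⟩, ?_⟩
  rintro _ ⟨c, hc, rfl⟩
  exact softmaxAgg_le_sigma' hτ hc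

end SoftmaxAgg

/-- the supremum of the softmax aggregator `F_τ` over the simplex
equals `1/N` when `τ ≤ 0` (attained at the uniform vector), and equals `σ(τ,N)`
when `τ > 0` (attained at the one-hot vectors). -/
theorem stmt7 (N : ℕ) (hN : 2 ≤ N) (τ : ℝ) :
    (τ ≤ 0 → IsGreatest (softmaxAgg τ '' simplex N) (1 / N) ∧
      (fun _ : Fin N => 1 / (N : ℝ)) ∈ simplex N ∧
      softmaxAgg τ (fun _ : Fin N => 1 / (N : ℝ)) = 1 / N) ∧
    (0 < τ → IsGreatest (softmaxAgg τ '' simplex N) (sigma' τ N) ∧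
      ∀ j0 : Fin N, (fun j => if j = j0 then (1 : ℝ) else 0) ∈ simplex N ∧
        softmaxAgg τ (fun j => if j = j0 then (1 : ℝ) else 0) = sigma' τ N) := by
  have : NeZero N := ⟨by lia⟩
  have oneHot_eq_single (j0 : Fin N) :
      (fun j => if j = j0 then (1 : ℝ) else 0) = Pi.single j0 1 :=
    funext fun j => (Pi.single_apply j0 1 j).symm
  simp only [oneHot_eq_single]
  exact ⟨fun hτ => ⟨isGreatest_softmaxAgg_of_nonpos hτ, const_one_div_mem_simplex,
      softmaxAgg_const τ _⟩,
    fun hτ => ⟨isGreatest_softmaxAgg_of_nonneg hτ.le, fun j0 =>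
      ⟨single_mem_stdSimplex ℝ j0, softmaxAgg_single_one τ j0⟩⟩⟩
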